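/- Let p, q > 1 be coprime integers. Then δ = (p−1)(q−1)/2 belongs to S(p,q) if and only if either (p is odd and r̄ is odd) or (p is even and k + l is even). -/

import Mathlib

/-!
If `q * v = 1 + m * p` with `0 < v < p`, substituting for the constant term of
`2δ = p * q - p - q + 1` gives `2δ = (q - m - 1) * p + (v - 1) * q`, with nonnegative coefficients.
As `2δ < p * q`, this is the only such representation of `2δ`, while a representation of `δ` would
double to one of `2δ` with even coefficients. So `δ ∈ S(p, q)` exactly when both coefficients are
even. Since `q = k * p + r` and `r * rb = 1 + l * p`, one can take `v = rb` and `m = k * rb + l`.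
-/

/-- The numerical semigroup generated by `p` and `q`:
all integers of the form `t*p + u*q` with `t, u ≥ 0`. -/
def Spq (p q : ℤ) : Set ℤ := {n : ℤ | ∃ t u : ℤ, 0 ≤ t ∧ 0 ≤ u ∧ n = t * p + u * q}

/-- The set of integers `s ≥ 0` such that `δ, δ+1, …, δ+s` either all belong to `S(p,q)`
or none of them does, where `δ = (p-1)*(q-1)/2`.  `K(p,q)` is the greatest element
of this set. -/
def KSet (p q : ℤ) : Set ℤ :=
  {s : ℤ | 0 ≤ s ∧ ∀ ρ : ℤ, 0 ≤ ρ → ρ ≤ s →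
    ((p - 1) * (q - 1) / 2 + ρ ∈ Spq p q ↔ (p - 1) * (q - 1) / 2 ∈ Spq p q)}

namespace Spq

lemma coeffs_unique {p q t u t' u' : ℤ} (hp : 0 < p) (hq : 0 < q) (hpq : IsCoprime p q)
    (ht : 0 ≤ t) (hu : 0 ≤ u) (ht' : 0 ≤ t') (hu' : 0 ≤ u')
    (h : t * p + u * q = t' * p + u' * q) (hlt : t * p + u * q < p * q) :
    t = t' ∧ u = u' := by
  have coeff_lt {a b : ℤ} (ha : 0 ≤ a) (hab : a * p + b * q < p * q) : b < p :=
    lt_of_mul_lt_mul_right (by linarith [mul_nonneg ha hp.le]) hq.le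
  have hup : u < p := coeff_lt ht hlt
  have hup' : u' < p := coeff_lt ht' (h ▸ hlt)
  have hdvd : p ∣ u - u' := hpq.dvd_of_dvd_mul_right ⟨t' - t, by linear_combination h⟩
  obtain rfl : u = u' := sub_eq_zero.1 <|
    Int.eq_zero_of_abs_lt_dvd hdvd (abs_lt.2 ⟨by linarith, by linarith⟩)
  exact ⟨mul_right_cancel₀ hp.ne' (add_right_cancel h), rfl⟩

lemma mem_iff_dvd_coeffs {p q c n a b : ℤ} (hp : 0 < p) (hq : 0 < q) (hpq : IsCoprime p q)
    (hc : 0 < c) (ha : 0 ≤ a) (hb : 0 ≤ b) (hn : c * n = a * p + b * q) (hlt : c * n < p * q) :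
    n ∈ Spq p q ↔ c ∣ a ∧ c ∣ b := by
  constructor
  · rintro ⟨t, u, ht, hu, rfl⟩
    obtain ⟨rfl, rfl⟩ : a = c * t ∧ b = c * u :=
      coeffs_unique hp hq hpq ha hb (mul_nonneg hc.le ht) (mul_nonneg hc.le hu)
        (by linear_combination -hn) (hn ▸ hlt)
    exact ⟨dvd_mul_right c t, dvd_mul_right c u⟩
  · rintro ⟨⟨t, rfl⟩, ⟨u, rfl⟩⟩
    refine ⟨t, u, nonneg_of_mul_nonneg_right ha hc, nonneg_of_mul_nonneg_right hb hc, ?_⟩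
    exact mul_left_cancel₀ hc.ne' (by linear_combination hn)

end Spq

lemma even_sub_one_mul_sub_one_of_isCoprime {p q : ℤ} (hpq : IsCoprime p q) :
    Even ((p - 1) * (q - 1)) := by
  rw [Int.even_mul, Int.even_sub_one, Int.even_sub_one, ← not_and_or]
  rintro ⟨hp, hq⟩
  exact Int.prime_two.not_isUnit (hpq.isUnit_of_dvd' hp.two_dvd hq.two_dvd)

theorem delta_mem_Spq_iff_odd_and_odd_sub {p q v m : ℤ} (hq : 0 < q) (hv : 0 < v) (hvp : v < p)
    (hbez : q * v = 1 + m * p) :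
    (p - 1) * (q - 1) / 2 ∈ Spq p q ↔ Odd v ∧ Odd (q - m) := by
  have hp : 0 < p := hv.trans hvp
  have hpq : IsCoprime p q := ⟨-m, v, by linear_combination hbez⟩
  have hmq : m < q := lt_of_mul_lt_mul_right (by linarith [mul_lt_mul_of_pos_left hvp hq]) hp.le
  have two_mul_delta : 2 * ((p - 1) * (q - 1) / 2) = (p - 1) * (q - 1) :=
    Int.mul_ediv_cancel' (even_sub_one_mul_sub_one_of_isCoprime hpq).two_dvd
  have representation :
      2 * ((p - 1) * (q - 1) / 2) = (q - m - 1) * p + (v - 1) * q := by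
    linear_combination two_mul_delta - hbez
  have hlt : 2 * ((p - 1) * (q - 1) / 2) < p * q := by linarith
  rw [Spq.mem_iff_dvd_coeffs hp hq hpq two_pos (by linarith) (by linarith) representation hlt,
    ← even_iff_two_dvd, ← even_iff_two_dvd, Int.even_sub_one, Int.even_sub_one,
    Int.not_even_iff_odd, Int.not_even_iff_odd, and_comm]

lemma odd_and_odd_of_mul_eq_one_add {p q v m : ℤ} (hp : Even p) (hbez : q * v = 1 + m * p) :
    Odd q ∧ Odd v :=
  Int.odd_mul.1 (hbez ▸ odd_one.add_even (hp.mul_left m))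

lemma odd_sub_of_mul_eq_one_add {p q v m : ℤ} (hp : Odd p) (hv : Odd v)
    (hbez : q * v = 1 + m * p) : Odd (q - m) := by
  have hparity : Odd (q * v - m * p) := by
    rw [hbez, add_sub_cancel_right]
    exact odd_one
  simpa only [Int.odd_sub, Int.odd_mul, Int.even_mul, hv, and_true, or_false,
    Int.not_even_iff_odd.2 hp] using hparity

theorem stmt19_general (p q k r rb l : ℤ) (hq : 0 < q) (hqkr : q = k * p + r)
    (hrb0 : 0 < rb) (hrbp : rb < p) (hrrb : r * rb = 1 + l * p) :
    (p - 1) * (q - 1) / 2 ∈ Spq p q ↔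
      ((Odd p ∧ Odd rb) ∨ (Even p ∧ Even (k + l))) := by
  have hbez : q * rb = 1 + (k * rb + l) * p := by linear_combination rb * hqkr + hrrb
  rw [delta_mem_Spq_iff_odd_and_odd_sub hq hrb0 hrbp hbez]
  rcases Int.even_or_odd p with hp | hp
  · obtain ⟨hq_odd, hrb⟩ := odd_and_odd_of_mul_eq_one_add hp hbez
    have hparity : Even (k * rb + l) ↔ Even (k + l) := by
      simp only [Int.even_add, Int.even_mul, Int.not_even_iff_odd.2 hrb, or_false]
    simp only [hp, hq_odd, hrb, hparity, Int.not_odd_iff_even.2 hp, Int.odd_sub, true_and,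
      false_and, false_or, true_iff]
  · simp only [hp, Int.not_even_iff_odd.2 hp, true_and, false_and, or_false]
    exact and_iff_left_of_imp fun hrb => odd_sub_of_mul_eq_one_add hp hrb hbez

theorem stmt19 (p q k r rb l : ℤ) (hp : 1 < p) (hq : 1 < q)
    (hpq : Int.gcd p q = 1)
    (hqkr : q = k * p + r) (hr0 : 0 < r) (hrp : r < p)
    (hrb0 : 0 < rb) (hrbp : rb < p) (hrrb : r * rb = 1 + l * p) :
    (p - 1) * (q - 1) / 2 ∈ Spq p q ↔
      ((Odd p ∧ Odd rb) ∨ (Even p ∧ Even (k + l))) :=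
  stmt19_general p q k r rb l (by linarith) hqkr hrb0 hrbp hrrb
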